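/- There exists a constant C > 0 such that for every R > 1 and every x ∈ ℝⁿ, ∫_{B_R(x)} |∇u| |∇v| dy ≤ C R^{n−1}. -/

import Mathlib

/-!
The proof has two parts: a two-point estimate that bounds `u(x) v(y)` by `C₁ (1 + |x - y|)²`, and a
subsolution built from `u` and `v` whose Laplacian dominates `|∇u| |∇v|`.

**Two-point estimate** (`product_bound`). The function `log u(x) + log v(y) - 2 log k(|x - y|)`, with
the concave profile `k(s) = 1 + s - δ s²` and a logarithmic weight `-log (1 + |·|²/R²)` in each
variable, attains its maximum over `|x - y| ≤ r`, because `u` and `v` grow at most linearly.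
At an interior off-diagonal maximum the first-order conditions bound the logarithmic gradients by
`2k'/k + 1/R`. Testing the second-order condition in the directions `(e, Se)`, with `S` the
reflection in the hyperplane orthogonal to `x - y`, bounds the sum of the Laplacians by
`4 (2 log k)''`. Since `Δ log u = v² - |∇u|²/u²`, and similarly for `v`, these are incompatible:
the quadratic gradient terms cancel and the concavity of `k` wins (`offdiag_contra`). On the
diagonal the same conditions bound `u² + v²`, and on `|x - y| = r` the linear growth bounds the
quotient directly. Letting `R → ∞` removes the weights.

**Subsolution** (`lap_auxF_ge`). On a ball `B_{2R}(x)` the pair is rescaled to `a = c u`,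
`b = c⁻¹ v`, so that `a, b ≤ C₁ (1 + 4R)`; this uses the two-point estimate for the maxima of
`u` and `v`, and changes neither `uv` nor `|∇u| |∇v|`. For `φ(s) = s - log (1 + s)` and a large
constant `K`, the function `f = K (φ(a) + φ(b)) + (ab)²` satisfies `Δf ≥ |∇a| |∇b|`, and `f = O(R)` on
`B_{2R}(x)`. Integrating `Δf` against a cutoff at scale `R` gives
`∫_{B_R} |∇u| |∇v| ≤ ∫ f Δη ≤ C · R · R⁻² · Rⁿ`.
-/

open MeasureTheory Metric Set
open scoped RealInnerProductSpace ENNReal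

/-- Euclidean space `ℝⁿ`. -/
abbrev Euc (n : ℕ) := EuclideanSpace ℝ (Fin n)

/-- The Laplacian `Δu` of a function `u : ℝⁿ → ℝ`. -/
noncomputable def lap {n : ℕ} (u : Euc n → ℝ) (x : Euc n) : ℝ :=
  ∑ i : Fin n,
    fderiv ℝ (fun y => fderiv ℝ u y (EuclideanSpace.single i 1)) x (EuclideanSpace.single i 1)

/-- The divergence `div Y = Σ_α ∂Y^α/∂x_α` of a vector field `Y`. -/
noncomputable def vdiv {n : ℕ} (Y : Euc n → Euc n) (x : Euc n) : ℝ :=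
  ∑ i : Fin n, fderiv ℝ Y x (EuclideanSpace.single i 1) i

/-- `DY(p,q)(x) = Σ_{α,β} (∂Y^α/∂x_β)(x) p_α q_β`. -/
noncomputable def DYbil {n : ℕ} (Y : Euc n → Euc n) (p q x : Euc n) : ℝ :=
  ∑ α : Fin n, ∑ β : Fin n,
    fderiv ℝ Y x (EuclideanSpace.single β 1) α * p α * q β

/-- The rescaled function `u_κ(x) = R⁻¹ u(x₀ + R x)` (with `κ = R⁴`). -/
noncomputable def resc {n : ℕ} (u : Euc n → ℝ) (x₀ : Euc n) (R : ℝ) (x : Euc n) : ℝ :=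
  R⁻¹ * u (x₀ + R • x)

/-! ### Directional derivatives -/

open Filter Topology

/-- The directional derivative `∂ₑF`. -/
noncomputable def dirD {n : ℕ} (F : Euc n → ℝ) (e x : Euc n) : ℝ := fderiv ℝ F x e

/-- The second directional derivative `∂ₑ∂ₑF`. -/
noncomputable def dirD2 {n : ℕ} (F : Euc n → ℝ) (e x : Euc n) : ℝ :=
  fderiv ℝ (fun y => fderiv ℝ F y e) x e

lemma contDiff_dirD {n : ℕ} {F : Euc n → ℝ} (hF : ContDiff ℝ (⊤ : ℕ∞) F) (e : Euc n) :
    ContDiff ℝ (⊤ : ℕ∞) (dirD F e) :=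
  (hF.fderiv_right (m := (⊤ : ℕ∞)) (by exact_mod_cast le_top)).clm_apply contDiff_const

lemma hasDerivAt_line {n : ℕ} {F : Euc n → ℝ} (hF : ContDiff ℝ (⊤ : ℕ∞) F) (x e : Euc n) (t : ℝ) :
    HasDerivAt (fun s : ℝ => F (x + s • e)) (dirD F e (x + t • e)) t := by
  have h1 : HasDerivAt (fun s : ℝ => x + s • e) e t := by
    simpa using ((hasDerivAt_id t).smul_const e).const_add x
  have h2 := (hF.differentiable (by simp) (x + t • e)).hasFDerivAt
  exact h2.comp_hasDerivAt t h1

lemma hasDerivAt_line2 {n : ℕ} {F : Euc n → ℝ} (hF : ContDiff ℝ (⊤ : ℕ∞) F) (x e : Euc n)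
    (t : ℝ) :
    HasDerivAt (fun s : ℝ => dirD F e (x + s • e)) (dirD2 F e (x + t • e)) t :=
  hasDerivAt_line (contDiff_dirD hF e) x e t

/-- The Laplacian may be computed in any orthonormal basis. -/
lemma lap_eq_sum {n : ℕ} {F : Euc n → ℝ} (hF : ContDiff ℝ (⊤ : ℕ∞) F)
    (b : OrthonormalBasis (Fin n) ℝ (Euc n)) (x : Euc n) :
    lap F x = ∑ i, dirD2 F (b i) x := by
  have key : ∀ e, dirD2 F e x = iteratedFDeriv ℝ 2 F x ![e, e] := by
    intro e
    rw [iteratedFDeriv_two_apply]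
    have hd : DifferentiableAt ℝ (fderiv ℝ F) x :=
      (hF.fderiv_right (m := (⊤ : ℕ∞)) (by exact_mod_cast le_top)).differentiable (by simp) x
    unfold dirD2
    rw [fderiv_clm_apply hd (differentiableAt_const e)]
    simp
  have h0 : lap F x = ∑ i, dirD2 F (EuclideanSpace.basisFun (Fin n) ℝ i) x := by
    simp [lap, dirD2]
  rw [h0]
  simp_rw [key]
  have h1 := congrFun
    (InnerProductSpace.laplacian_eq_iteratedFDeriv_orthonormalBasis F
      (EuclideanSpace.basisFun (Fin n) ℝ)) x
  have h2 := congrFun (InnerProductSpace.laplacian_eq_iteratedFDeriv_orthonormalBasis F b) x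
  rw [← h1, ← h2]

lemma dirD_eq_inner {n : ℕ} {F : Euc n → ℝ} (hF : ContDiff ℝ (⊤ : ℕ∞) F) (x e : Euc n) :
    dirD F e x = inner ℝ (gradient F x) e := by
  have h := (hF.differentiable (by simp) x).hasGradientAt.hasFDerivAt.fderiv
  unfold dirD
  rw [h]
  simp

lemma sum_dirD_sq {n : ℕ} {F : Euc n → ℝ} (hF : ContDiff ℝ (⊤ : ℕ∞) F)
    (b : OrthonormalBasis (Fin n) ℝ (Euc n)) (x : Euc n) :
    ∑ i, dirD F (b i) x ^ 2 = ‖gradient F x‖ ^ 2 := by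
  simp_rw [dirD_eq_inner hF]
  exact b.sum_sq_inner_left _

/-- The second derivative is nonpositive at a local maximum: otherwise the point would also be a
local minimum, and the function locally constant. -/
lemma second_deriv_nonpos {g g' : ℝ → ℝ} {c : ℝ} (h1 : ∀ᶠ t in 𝓝 (0 : ℝ), HasDerivAt g (g' t) t)
    (h2 : HasDerivAt g' c 0) (hmax : IsLocalMax g 0) : c ≤ 0 := by
  by_contra! hc
  have e1 : deriv g =ᶠ[𝓝 0] g' := h1.mono fun t ht => ht.deriv
  have hd : deriv (deriv g) 0 = c := by rw [e1.deriv_eq]; exact h2.deriv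
  have hmin : IsLocalMin g 0 :=
    isLocalMin_of_deriv_deriv_pos (by rw [hd]; exact hc) hmax.deriv_eq_zero
      h1.self_of_nhds.continuousAt
  have hconst : g =ᶠ[𝓝 0] fun _ => g 0 := by
    filter_upwards [hmax, hmin] with t ht1 ht2 using le_antisymm ht1 ht2
  have e2 : deriv g =ᶠ[𝓝 0] fun _ => (0 : ℝ) := by
    have := hconst.deriv
    simpa using this
  rw [e2.deriv_eq] at hd
  simp at hd
  linarith

lemma right_deriv_nonpos {g : ℝ → ℝ} {c : ℝ} (h1 : HasDerivAt g c 0)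
    (hmax : ∀ᶠ t in 𝓝[>] (0 : ℝ), g t ≤ g 0) : c ≤ 0 := by
  have h2 := h1.hasDerivWithinAt (s := Ioi 0)
  rw [hasDerivWithinAt_iff_tendsto_slope' (by simp)] at h2
  refine le_of_tendsto h2 ?_
  filter_upwards [hmax, self_mem_nhdsWithin] with t ht ht0
  rw [slope_def_field]
  have : (0 : ℝ) < t := ht0
  exact div_nonpos_of_nonpos_of_nonneg (by linarith) (by linarith)

/-! ### Logarithms and the weight -/

lemma dirD_log {n : ℕ} {F : Euc n → ℝ} (hF : ContDiff ℝ (⊤ : ℕ∞) F) (hpos : ∀ x, 0 < F x)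
    (e x : Euc n) : dirD (fun y => Real.log (F y)) e x = dirD F e x / F x := by
  have h := ((hF.differentiable (by simp) x).hasFDerivAt.log (hpos x).ne').fderiv
  unfold dirD
  rw [h]
  simp [div_eq_inv_mul]

lemma contDiff_log_comp {n : ℕ} {F : Euc n → ℝ} (hF : ContDiff ℝ (⊤ : ℕ∞) F)
    (hpos : ∀ x, 0 < F x) : ContDiff ℝ (⊤ : ℕ∞) (fun y => Real.log (F y)) :=
  hF.log fun x => (hpos x).ne'

lemma dirD2_log {n : ℕ} {F : Euc n → ℝ} (hF : ContDiff ℝ (⊤ : ℕ∞) F) (hpos : ∀ x, 0 < F x)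
    (e x : Euc n) :
    dirD2 (fun y => Real.log (F y)) e x = dirD2 F e x / F x - (dirD F e x / F x) ^ 2 := by
  have h1 := hasDerivAt_line2 (contDiff_log_comp hF hpos) x e 0
  have h2 := (hasDerivAt_line2 hF x e 0).div (hasDerivAt_line hF x e 0) (hpos _).ne'
  have h3 : (fun s : ℝ => dirD (fun y => Real.log (F y)) e (x + s • e)) =
      fun s => dirD F e (x + s • e) / F (x + s • e) := by
    funext s; exact dirD_log hF hpos e _
  rw [h3] at h1
  have h4 := h1.unique h2
  simp only [zero_smul, add_zero] at h4
  rw [h4]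
  have := (hpos x).ne'
  field_simp

lemma dirD_sub {n : ℕ} {F G : Euc n → ℝ} (hF : ContDiff ℝ (⊤ : ℕ∞) F)
    (hG : ContDiff ℝ (⊤ : ℕ∞) G) (e x : Euc n) :
    dirD (fun y => F y - G y) e x = dirD F e x - dirD G e x := by
  unfold dirD
  rw [fderiv_fun_sub (hF.differentiable (by simp) x) (hG.differentiable (by simp) x)]
  simp

lemma dirD2_sub {n : ℕ} {F G : Euc n → ℝ} (hF : ContDiff ℝ (⊤ : ℕ∞) F)
    (hG : ContDiff ℝ (⊤ : ℕ∞) G) (e x : Euc n) :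
    dirD2 (fun y => F y - G y) e x = dirD2 F e x - dirD2 G e x := by
  have h := dirD_sub (contDiff_dirD hF e) (contDiff_dirD hG e) e x
  have h3 : (fun y => dirD F e y - dirD G e y) = dirD (fun y => F y - G y) e := by
    funext y; exact (dirD_sub hF hG e y).symm
  rw [h3] at h
  exact h

/-- The weight `1 + |x|²/R²`. -/
noncomputable def wt {n : ℕ} (R : ℝ) (x : Euc n) : ℝ := 1 + ‖x‖ ^ 2 / R ^ 2

lemma one_le_wt {n : ℕ} (R : ℝ) (x : Euc n) : 1 ≤ wt R x := by
  unfold wt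
  have : 0 ≤ ‖x‖ ^ 2 / R ^ 2 := by positivity
  linarith

lemma wt_pos {n : ℕ} (R : ℝ) (x : Euc n) : 0 < wt R x :=
  lt_of_lt_of_le one_pos (one_le_wt R x)

lemma contDiff_wt {n : ℕ} (R : ℝ) : ContDiff ℝ (⊤ : ℕ∞) (wt R : Euc n → ℝ) := by
  unfold wt
  exact contDiff_const.add ((contDiff_norm_sq ℝ).div_const _)

lemma dirD_wt {n : ℕ} (R : ℝ) (e x : Euc n) : dirD (wt R) e x = 2 * inner ℝ x e / R ^ 2 := by
  have h1 := hasDerivAt_line (contDiff_wt R) x e 0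
  have h2 : HasDerivAt (fun s : ℝ => wt R (x + s • e)) (2 * inner ℝ x e / R ^ 2) 0 := by
    have h3 : (fun s : ℝ => wt R (x + s • e)) =
        fun s => 1 + (‖x‖ ^ 2 + 2 * (s * inner ℝ x e) + s ^ 2 * ‖e‖ ^ 2) / R ^ 2 := by
      funext s
      simp only [wt, norm_add_sq_real, inner_smul_right, norm_smul, mul_pow, Real.norm_eq_abs,
        sq_abs]
    rw [h3]
    have := ((((((hasDerivAt_id (0 : ℝ)).mul_const (inner ℝ x e)).const_mul 2).const_add
      (‖x‖ ^ 2)).add (((hasDerivAt_id (0 : ℝ)).pow 2).mul_const (‖e‖ ^ 2))).div_const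
      (R ^ 2)).const_add 1
    convert! this using 1
    simp
  simpa using h1.unique h2

lemma dirD2_wt {n : ℕ} (R : ℝ) (e x : Euc n) : dirD2 (wt R) e x = 2 * ‖e‖ ^ 2 / R ^ 2 := by
  have h1 := hasDerivAt_line2 (contDiff_wt R) x e 0
  have h3 : (fun s : ℝ => dirD (wt R) e (x + s • e)) =
      fun s => 2 * (inner ℝ x e + s * ‖e‖ ^ 2) / R ^ 2 := by
    funext s
    rw [dirD_wt, inner_add_left, inner_smul_left]
    simp
  rw [h3] at h1
  have h2 := ((((hasDerivAt_id (0 : ℝ)).mul_const (‖e‖ ^ 2)).const_add (inner ℝ x e)).const_mul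
    2).div_const (R ^ 2)
  have := h1.unique h2
  simpa using this

lemma abs_dirD_log_wt_le {n : ℕ} {R : ℝ} (hR : 0 < R) (e x : Euc n) :
    |dirD (fun y => Real.log (wt R y)) e x| ≤ ‖e‖ / R := by
  rw [dirD_log (contDiff_wt R) (wt_pos R), dirD_wt, abs_div, abs_of_pos (wt_pos R x),
    div_le_iff₀ (wt_pos R x), abs_div, abs_mul, abs_of_pos (by positivity : 0 < R ^ 2)]
  have h1 := abs_real_inner_le_norm x e
  unfold wt
  rw [div_le_iff₀ (by positivity)]
  have h2 : ‖e‖ / R * (1 + ‖x‖ ^ 2 / R ^ 2) * R ^ 2 = ‖e‖ * ((R ^ 2 + ‖x‖ ^ 2) / R) := by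
    field_simp
  rw [h2]
  have h3 : 2 * ‖x‖ ≤ (R ^ 2 + ‖x‖ ^ 2) / R := by
    rw [le_div_iff₀ hR]
    nlinarith [sq_nonneg (R - ‖x‖)]
  have h4 := mul_le_mul_of_nonneg_left h3 (norm_nonneg e)
  simp only [abs_two]
  nlinarith

lemma dirD2_log_wt_le {n : ℕ} (R : ℝ) (e x : Euc n) :
    dirD2 (fun y => Real.log (wt R y)) e x ≤ 2 * ‖e‖ ^ 2 / R ^ 2 := by
  rw [dirD2_log (contDiff_wt R) (wt_pos R), dirD2_wt]
  have h1 : 2 * ‖e‖ ^ 2 / R ^ 2 / wt R x ≤ 2 * ‖e‖ ^ 2 / R ^ 2 :=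
    div_le_self (by positivity) (one_le_wt R x)
  nlinarith [sq_nonneg (dirD (wt R) e x / wt R x)]

/-- Laplacian of `log u - log (1 + |x|²/R²)`, bounded below through the logarithmic gradient. -/
lemma lap_log_sub_ge {n : ℕ} {u : Euc n → ℝ} (hu : ContDiff ℝ (⊤ : ℕ∞) u) (hpos : ∀ x, 0 < u x)
    (R : ℝ) (x : Euc n) :
    lap u x / u x - (‖gradient u x‖ / u x) ^ 2 - 2 * n / R ^ 2 ≤
      lap (fun y => Real.log (u y) - Real.log (wt R y)) x := by
  have c1 := contDiff_log_comp hu hpos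
  have c2 := contDiff_log_comp (contDiff_wt (n := n) R) (wt_pos R)
  let b := EuclideanSpace.basisFun (Fin n) ℝ
  rw [lap_eq_sum (c1.sub c2) b, lap_eq_sum hu b, div_pow, ← sum_dirD_sq hu b]
  have h : ∀ i, dirD2 u (b i) x / u x - dirD u (b i) x ^ 2 / u x ^ 2 - 2 / R ^ 2 ≤
      dirD2 (fun y => Real.log (u y) - Real.log (wt R y)) (b i) x := by
    intro i
    rw [dirD2_sub c1 c2, dirD2_log hu hpos, div_pow]
    have := dirD2_log_wt_le R (b i) x
    rw [b.norm_eq_one] at this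
    norm_num at this ⊢
    linarith
  have h2 := Finset.sum_le_sum fun i (_ : i ∈ Finset.univ) => h i
  refine le_trans (le_of_eq ?_) h2
  rw [Finset.sum_sub_distrib, Finset.sum_sub_distrib, Finset.sum_div, Finset.sum_div]
  simp
  ring

/-! ### First- and second-order conditions for two-point maxima -/

/-- First-order condition at a maximum of `a x + b y - ψ |x - y|`. -/
lemma twoPoint_first {n : ℕ} {a b : Euc n → ℝ} (ha : ContDiff ℝ (⊤ : ℕ∞) a) {ψ : ℝ → ℝ}
    {r p : ℝ} {x₀ y₀ : Euc n} (hmono : MonotoneOn ψ (Icc 0 r)) (hr : ‖x₀ - y₀‖ < r)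
    (hψ : HasDerivAt ψ p ‖x₀ - y₀‖)
    (hmax : ∀ x y, ‖x - y‖ ≤ r → a x + b y - ψ ‖x - y‖ ≤ a x₀ + b y₀ - ψ ‖x₀ - y₀‖) (h : Euc n) :
    dirD a h x₀ ≤ p * ‖h‖ := by
  set ρ := ‖x₀ - y₀‖ with hρ
  have h1 := hasDerivAt_line ha x₀ h 0
  have h2 : HasDerivAt (fun t : ℝ => ρ + t * ‖h‖) ‖h‖ 0 := by
    simpa using ((hasDerivAt_id (0 : ℝ)).mul_const ‖h‖).const_add ρ
  have h3 : HasDerivAt (fun t : ℝ => ψ (ρ + t * ‖h‖)) (p * ‖h‖) 0 := by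
    refine HasDerivAt.comp (h₂ := ψ) (0 : ℝ) ?_ h2
    simpa using hψ
  have h4 := h1.sub h3
  simp only [zero_smul, add_zero] at h4
  have h5 := right_deriv_nonpos h4 ?_
  · linarith
  · have hc : ContinuousAt (fun t : ℝ => ρ + t * ‖h‖) 0 := h2.continuousAt
    have hlt : ∀ᶠ t in 𝓝 (0 : ℝ), ρ + t * ‖h‖ < r :=
      hc.eventually_lt continuousAt_const (by simpa using hr)
    filter_upwards [hlt.filter_mono nhdsWithin_le_nhds, self_mem_nhdsWithin] with t ht ht0
    have ht0' : 0 < t := ht0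
    have hn : ‖x₀ + t • h - y₀‖ ≤ ρ + t * ‖h‖ := by
      have : x₀ + t • h - y₀ = (x₀ - y₀) + t • h := by abel
      rw [this]
      refine (norm_add_le _ _).trans ?_
      rw [norm_smul, Real.norm_of_nonneg ht0'.le]
    have hm := hmax (x₀ + t • h) y₀ (hn.trans ht.le)
    have hψm := hmono ⟨norm_nonneg _, hn.trans ht.le⟩
      ⟨(norm_nonneg _).trans hn, ht.le⟩ hn
    simp only [Pi.sub_apply, zero_smul, add_zero, zero_mul]
    linarith

/-- Second-order condition at an off-diagonal maximum of `a x + b y - ψ |x - y|`, tested in the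
directions `(e, S e)` with `S` the reflection in the hyperplane orthogonal to `x₀ - y₀`. Moving
in these directions only changes the length of `x - y`, never its direction. -/
lemma twoPoint_second {n : ℕ} {a b : Euc n → ℝ} (ha : ContDiff ℝ (⊤ : ℕ∞) a)
    (hb : ContDiff ℝ (⊤ : ℕ∞) b) {ψ ψ' : ℝ → ℝ} {r q : ℝ} {x₀ y₀ : Euc n}
    (hr : ‖x₀ - y₀‖ < r) (h0 : 0 < ‖x₀ - y₀‖)
    (hψ : ∀ᶠ s in 𝓝 ‖x₀ - y₀‖, HasDerivAt ψ (ψ' s) s) (hψ' : HasDerivAt ψ' q ‖x₀ - y₀‖)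
    (hmax : ∀ x y, ‖x - y‖ ≤ r → a x + b y - ψ ‖x - y‖ ≤ a x₀ + b y₀ - ψ ‖x₀ - y₀‖) :
    lap a x₀ + lap b y₀ ≤ 4 * q := by
  set ρ := ‖x₀ - y₀‖ with hρ
  set e : Euc n := ρ⁻¹ • (x₀ - y₀) with he
  have hen : ‖e‖ = 1 := by
    rw [he, norm_smul, norm_inv, Real.norm_of_nonneg h0.le, ← hρ, inv_mul_cancel₀ h0.ne']
  have hxy : x₀ - y₀ = ρ • e := by rw [he, smul_smul, mul_inv_cancel₀ h0.ne', one_smul]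
  let S := (ℝ ∙ e)ᗮ.reflection
  have hS : ∀ h, h - S h = (2 * inner ℝ e h) • e := by
    intro h
    have : S h = -((ℝ ∙ e).reflection h) := Submodule.reflection_orthogonal_apply _ _
    rw [this, Submodule.reflection_singleton_apply, hen]
    simp only [RCLike.ofReal_real_eq_id, id, one_pow, div_one]
    rw [mul_smul, two_smul, two_smul]
    abel
  let B := EuclideanSpace.basisFun (Fin n) ℝ
  have key : ∀ h : Euc n, dirD2 a h x₀ + dirD2 b (S h) y₀ - (2 * inner ℝ e h) ^ 2 * q ≤ 0 := by
    intro h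
    set c : ℝ := 2 * inner ℝ e h with hc
    have hlin : ∀ t : ℝ, HasDerivAt (fun t : ℝ => ρ + t * c) c t := fun t => by
      simpa using ((hasDerivAt_id t).mul_const c).const_add ρ
    have hcont : Tendsto (fun t : ℝ => ρ + t * c) (𝓝 0) (𝓝 ρ) := by
      have := (hlin 0).continuousAt.tendsto
      simpa using this
    refine second_deriv_nonpos
      (g := fun t => a (x₀ + t • h) + b (y₀ + t • S h) - ψ (ρ + t * c))
      (g' := fun t => dirD a h (x₀ + t • h) + dirD b (S h) (y₀ + t • S h) - ψ' (ρ + t * c) * c)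
      ?_ ?_ ?_
    · filter_upwards [hcont.eventually hψ] with t ht
      exact ((hasDerivAt_line ha x₀ h t).add (hasDerivAt_line hb y₀ (S h) t)).sub
        (HasDerivAt.comp (h₂ := ψ) t ht (hlin t))
    · have h3 : HasDerivAt (fun t : ℝ => ψ' (ρ + t * c)) (q * c) 0 := by
        refine HasDerivAt.comp (h₂ := ψ') (0 : ℝ) ?_ (hlin 0)
        simpa using hψ'
      have := ((hasDerivAt_line2 ha x₀ h 0).add (hasDerivAt_line2 hb y₀ (S h) 0)).sub
        (h3.mul_const c)
      simp only [zero_smul, add_zero] at this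
      convert! this using 1
      ring
    · have e1 : ∀ᶠ t in 𝓝 (0 : ℝ), 0 < ρ + t * c := hcont.eventually (lt_mem_nhds h0)
      have e2 : ∀ᶠ t in 𝓝 (0 : ℝ), ρ + t * c < r := hcont.eventually (gt_mem_nhds hr)
      filter_upwards [e1, e2] with t ht1 ht2
      have hd : x₀ + t • h - (y₀ + t • S h) = (ρ + t * c) • e := by
        have : x₀ + t • h - (y₀ + t • S h) = (x₀ - y₀) + t • (h - S h) := by
          rw [smul_sub]; abel
        rw [this, hS, ← hc, add_smul, smul_smul, ← hxy]
      have hn : ‖x₀ + t • h - (y₀ + t • S h)‖ = ρ + t * c := by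
        rw [hd, norm_smul, hen, mul_one, Real.norm_of_nonneg ht1.le]
      have := hmax (x₀ + t • h) (y₀ + t • S h) (by rw [hn]; exact ht2.le)
      rw [hn] at this
      simpa using this
  have hsum := Finset.sum_nonpos fun i (_ : i ∈ Finset.univ) => key (B i)
  rw [Finset.sum_sub_distrib, Finset.sum_add_distrib, ← lap_eq_sum ha B] at hsum
  have h2 : ∑ i, dirD2 b (S (B i)) y₀ = lap b y₀ := by
    rw [lap_eq_sum hb (B.map S)]
    simp
  have h3 : ∑ i, (2 * inner ℝ e (B i)) ^ 2 * q = 4 * q := by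
    rw [← Finset.sum_mul]
    simp_rw [mul_pow]
    rw [← Finset.mul_sum, B.sum_sq_inner_left, hen]
    norm_num
  rw [h2, h3] at hsum
  linarith

/-- Second-order condition at a diagonal maximum of `a x + b y - ψ |x - y|`. -/
lemma twoPoint_diag {n : ℕ} {a b : Euc n → ℝ} (ha : ContDiff ℝ (⊤ : ℕ∞) a)
    (hb : ContDiff ℝ (⊤ : ℕ∞) b) {x₀ : Euc n} (hmax : ∀ x, a x + b x ≤ a x₀ + b x₀) :
    lap a x₀ + lap b x₀ ≤ 0 := by
  let B := EuclideanSpace.basisFun (Fin n) ℝ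
  rw [lap_eq_sum ha B, lap_eq_sum hb B, ← Finset.sum_add_distrib]
  refine Finset.sum_nonpos fun i _ => ?_
  refine second_deriv_nonpos (g := fun t => a (x₀ + t • B i) + b (x₀ + t • B i))
      (g' := fun t => dirD a (B i) (x₀ + t • B i) + dirD b (B i) (x₀ + t • B i)) ?_ ?_ ?_
  · exact Eventually.of_forall fun t =>
      (hasDerivAt_line ha x₀ (B i) t).add (hasDerivAt_line hb x₀ (B i) t)
  · have := (hasDerivAt_line2 ha x₀ (B i) 0).add (hasDerivAt_line2 hb x₀ (B i) 0)
    simp only [zero_smul, add_zero] at this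
    exact this
  · exact Eventually.of_forall fun t => by simpa using hmax (x₀ + t • B i)

/-! ### The two-point product bound -/

/-- Linear growth is absorbed by the weight at the cost of a factor `R`. -/
lemma one_add_norm_le_wt {n : ℕ} {R : ℝ} (hR : 2 ≤ R) (x : Euc n) : 1 + ‖x‖ ≤ R * wt R x := by
  have hR0 : 0 < R := by linarith
  unfold wt
  have : R * (1 + ‖x‖ ^ 2 / R ^ 2) = (R ^ 2 + ‖x‖ ^ 2) / R := by field_simp
  rw [this, le_div_iff₀ hR0]
  nlinarith [sq_nonneg (R - 2 * ‖x‖), norm_nonneg x]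

/-- A first-order condition on `log u` minus the logarithmic weight bounds the logarithmic gradient
of `u`. -/
lemma grad_div_le {n : ℕ} {u : Euc n → ℝ} (hu : ContDiff ℝ (⊤ : ℕ∞) u) (hpos : ∀ x, 0 < u x)
    {R p : ℝ} (hR : 0 < R) (x : Euc n) (hp : 0 ≤ p)
    (h : ∀ e, dirD (fun y => Real.log (u y) - Real.log (wt R y)) e x ≤ p * ‖e‖) :
    ‖gradient u x‖ / u x ≤ p + 1 / R := by
  have h1 := h (gradient u x)
  rw [dirD_sub (contDiff_log_comp hu hpos) (contDiff_log_comp (contDiff_wt R) (wt_pos R)),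
    dirD_log hu hpos, dirD_eq_inner hu, real_inner_self_eq_norm_sq] at h1
  have h2 := le_of_abs_le (abs_dirD_log_wt_le hR (gradient u x) x)
  rcases (norm_nonneg (gradient u x)).eq_or_lt with h0 | h0
  · rw [← h0]; simp; positivity
  · refine le_of_mul_le_mul_right ?_ h0
    calc ‖gradient u x‖ / u x * ‖gradient u x‖ = ‖gradient u x‖ ^ 2 / u x := by ring
      _ ≤ p * ‖gradient u x‖ + ‖gradient u x‖ / R := by linarith
      _ = _ := by ring

/-- The concave comparison profile `k(s) = 1 + s - δ s²`; the two-point function is compared with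
`k(|x - y|)²`. -/
noncomputable def prof (δ s : ℝ) : ℝ := 1 + s - δ * s ^ 2

lemma hasDerivAt_prof (δ s : ℝ) : HasDerivAt (prof δ) (1 - 2 * δ * s) s := by
  have := ((hasDerivAt_id s).const_add 1).sub (((hasDerivAt_id s).pow 2).const_mul δ)
  convert! this using 1
  simp
  ring

lemma prof_lower {δ s : ℝ} (hs : 0 ≤ s) (hs' : δ * s ≤ 1 / 4) : 1 + 3 / 4 * s ≤ prof δ s := by
  unfold prof; nlinarith

lemma prof_upper {δ s : ℝ} (hδ : 0 ≤ δ) : prof δ s ≤ 1 + s := by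
  unfold prof; nlinarith [mul_nonneg hδ (sq_nonneg s)]

/-- The weighted two-point quotient attains its maximum: by linear growth of `u` and `v` it tends to
zero at infinity in `|x - y| ≤ r`. -/
lemma exists_twoPoint_max {n : ℕ} {u v : Euc n → ℝ} (hu : ContDiff ℝ (⊤ : ℕ∞) u)
    (hv : ContDiff ℝ (⊤ : ℕ∞) v) (hupos : ∀ x, 0 < u x) (hvpos : ∀ x, 0 < v x)
    {C₀ : ℝ} (hC₀ : 0 < C₀) (hgrowth : ∀ x, u x + v x ≤ C₀ * (1 + ‖x‖))
    {R δ r : ℝ} (hR : 2 ≤ R) (hδ : 0 < δ) (hr : δ * r ≤ 1 / 4) (hr0 : 0 ≤ r) :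
    ∃ x₀ y₀ : Euc n, ‖x₀ - y₀‖ ≤ r ∧ ∀ x y, ‖x - y‖ ≤ r →
      u x / wt R x * (v y / wt R y) / prof δ ‖x - y‖ ^ 2 ≤
        u x₀ / wt R x₀ * (v y₀ / wt R y₀) / prof δ ‖x₀ - y₀‖ ^ 2 := by
  have hR0 : 0 < R := by linarith
  set Φ : Euc n × Euc n → ℝ := fun z =>
    u z.1 / wt R z.1 * (v z.2 / wt R z.2) / prof δ ‖z.1 - z.2‖ ^ 2 with hΦ
  have hk : ∀ x y : Euc n, ‖x - y‖ ≤ r → 1 ≤ prof δ ‖x - y‖ := by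
    intro x y h
    have h1 : δ * ‖x - y‖ ≤ 1 / 4 := (mul_le_mul_of_nonneg_left h hδ.le).trans hr
    linarith [prof_lower (norm_nonneg (x - y)) h1, norm_nonneg (x - y)]
  have hε : 0 < Φ (0, 0) := by
    have := hk 0 0 (by simpa using hr0)
    have h1 := hupos 0
    have h2 := hvpos 0
    have h3 := wt_pos (n := n) R 0
    simp only [hΦ]
    positivity
  set ε := Φ (0, 0)
  set r₀ : ℝ := max 1 (2 * C₀ ^ 2 * R ^ 3 / ε) with hr₀
  let K : Set (Euc n × Euc n) := {z | ‖z.1‖ ≤ r₀ ∧ ‖z.1 - z.2‖ ≤ r}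
  have hKc : IsCompact K := by
    refine Metric.isCompact_of_isClosed_isBounded ?_ ?_
    · have k1 : IsClosed {z : Euc n × Euc n | ‖z.1‖ ≤ r₀} :=
        isClosed_le (by fun_prop) (by fun_prop)
      have k2 : IsClosed {z : Euc n × Euc n | ‖z.1 - z.2‖ ≤ r} :=
        isClosed_le (by fun_prop) (by fun_prop)
      exact k1.inter k2
    · refine (Metric.isBounded_closedBall (x := (0 : Euc n × Euc n)) (r := r₀ + r)).subset ?_
      rintro ⟨x, y⟩ ⟨h1, h2⟩
      simp only at h1 h2
      rw [mem_closedBall_zero_iff, Prod.norm_def]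
      refine max_le (by linarith) ?_
      have : ‖y‖ ≤ ‖x‖ + ‖x - y‖ := by
        have := norm_sub_le x (x - y)
        simpa using this
      simp only
      linarith
  have hK0 : (0, 0) ∈ K := by
    refine ⟨?_, by simpa using hr0⟩
    simp only [norm_zero]
    exact zero_le_one.trans (le_max_left _ _)
  have hcont : ContinuousOn Φ K := by
    have c1 := hu.continuous
    have c2 := hv.continuous
    have c3 : Continuous (wt R : Euc n → ℝ) := (contDiff_wt R).continuous
    have c4 : Continuous (prof δ) := by unfold prof; fun_prop
    have c5 : Continuous fun z : Euc n × Euc n => prof δ ‖z.1 - z.2‖ ^ 2 :=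
      (c4.comp (by fun_prop)).pow 2
    have c6 : Continuous fun z : Euc n × Euc n =>
        u z.1 / wt R z.1 * (v z.2 / wt R z.2) :=
      ((c1.comp continuous_fst).div (c3.comp continuous_fst) fun z => (wt_pos R _).ne').mul
        ((c2.comp continuous_snd).div (c3.comp continuous_snd) fun z => (wt_pos R _).ne')
    refine c6.continuousOn.div c5.continuousOn ?_
    rintro ⟨x, y⟩ ⟨-, h2⟩
    have := hk x y h2
    simp only
    positivity
  obtain ⟨⟨x₀, y₀⟩, hm, hmax⟩ := hKc.exists_isMaxOn ⟨_, hK0⟩ hcont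
  refine ⟨x₀, y₀, hm.2, fun x y hxy => ?_⟩
  -- Outside `|x| ≤ r₀` the quotient is at most its value `ε` at the origin.
  by_cases hx : ‖x‖ ≤ r₀
  · exact hmax (show (x, y) ∈ K from ⟨hx, hxy⟩)
  · push Not at hx
    refine le_trans ?_ (hmax hK0)
    change _ ≤ ε
    have hx1 : 1 < ‖x‖ := (le_max_left _ _).trans_lt hx
    have hx2 : 2 * C₀ ^ 2 * R ^ 3 / ε < ‖x‖ := (le_max_right _ _).trans_lt hx
    have hw := wt_pos R x
    have a1 : u x / wt R x ≤ 2 * C₀ * R ^ 2 / ‖x‖ := by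
      have g1 : u x ≤ C₀ * (1 + ‖x‖) := by linarith [hgrowth x, hvpos x]
      have g2 : ‖x‖ ^ 2 / R ^ 2 ≤ wt R x := by unfold wt; linarith
      calc u x / wt R x ≤ C₀ * (1 + ‖x‖) / (‖x‖ ^ 2 / R ^ 2) := by gcongr
        _ ≤ C₀ * (2 * ‖x‖) / (‖x‖ ^ 2 / R ^ 2) := by gcongr; linarith
        _ = _ := by field_simp
    have a2 : v y / wt R y ≤ C₀ * R := by
      rw [div_le_iff₀ (wt_pos R y)]
      have := mul_le_mul_of_nonneg_left (one_add_norm_le_wt hR y) hC₀.le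
      linarith [hgrowth y, hupos y]
    have hp1 : 1 ≤ prof δ ‖x - y‖ ^ 2 := one_le_pow₀ (hk x y hxy)
    have hun : 0 ≤ u x / wt R x := (div_pos (hupos x) hw).le
    have hvn : 0 ≤ v y / wt R y := (div_pos (hvpos y) (wt_pos R y)).le
    calc u x / wt R x * (v y / wt R y) / prof δ ‖x - y‖ ^ 2
        ≤ u x / wt R x * (v y / wt R y) := div_le_self (by positivity) hp1
      _ ≤ 2 * C₀ * R ^ 2 / ‖x‖ * (C₀ * R) := by gcongr
      _ = 2 * C₀ ^ 2 * R ^ 3 / ‖x‖ := by ring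
      _ ≤ ε := by
          rw [div_lt_iff₀ hε] at hx2
          rw [div_le_iff₀ (by linarith)]
          linarith

/-- The arithmetic contradiction at an interior off-diagonal maximum: `k`, `k'` are the values of
the profile and its derivative, `p = 2k'/k` and `q = (2 log k)''`. -/
lemma offdiag_contra {N R k k' δ : ℝ} (hN : 1 ≤ N) (hR : 2 ≤ R) (hk : 1 ≤ k) (hkR : k ≤ R)
    (hk' : k' ≤ 1) (hδ : δ = N / R)
    (h : 0 < 2 * (2 * k' / k + 1 / R) ^ 2 + 4 * N / R ^ 2
      + 4 * (2 * (-2 * δ * k - k' ^ 2) / k ^ 2)) : False := by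
  subst hδ
  have hR0 : 0 < R := by linarith
  have hk0 : 0 < k := by linarith
  have e : 2 * (2 * k' / k + 1 / R) ^ 2 + 4 * N / R ^ 2
      + 4 * (2 * (-2 * (N / R) * k - k' ^ 2) / k ^ 2) =
      (8 * k' * R + (2 + 4 * N) * k - 16 * N * R) / (k * R ^ 2) := by
    field_simp
    ring
  rw [e] at h
  have h2 : 0 < 8 * k' * R + (2 + 4 * N) * k - 16 * N * R := by
    by_contra! hc
    exact absurd h (not_lt.mpr (div_nonpos_of_nonpos_of_nonneg hc (by positivity)))
  nlinarith [mul_le_mul_of_nonneg_right hk' hR0.le,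
    mul_le_mul_of_nonneg_left hkR (by linarith : (0:ℝ) ≤ 2 + 4 * N),
    mul_le_mul_of_nonneg_right hN hR0.le]

set_option maxHeartbeats 1000000 in
/-- The weighted two-point bound: the maximum principle is applied on the product space to
`log u(x) + log v(y) - 2 log k(|x - y|)` minus logarithmic weights. -/
lemma weighted_bound {n : ℕ} (hn : 2 ≤ n) {u v : Euc n → ℝ} (hu : ContDiff ℝ (⊤ : ℕ∞) u)
    (hv : ContDiff ℝ (⊤ : ℕ∞) v) (hupos : ∀ x, 0 < u x) (hvpos : ∀ x, 0 < v x)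
    (hequ : ∀ x, lap u x = u x * v x ^ 2) (heqv : ∀ x, lap v x = v x * u x ^ 2)
    {C₀ : ℝ} (hC₀ : 0 < C₀) (hgrowth : ∀ x, u x + v x ≤ C₀ * (1 + ‖x‖))
    {R : ℝ} (hR : 2 ≤ R) {x y : Euc n} (hxy : ‖x - y‖ ≤ R / (4 * n)) :
    u x / wt R x * (v y / wt R y) / prof (n / R) ‖x - y‖ ^ 2 ≤
      36 * n ^ 2 * C₀ ^ 2 + 9 + 2 * n := by
  have hR0 : 0 < R := by linarith
  have hN : (2 : ℝ) ≤ n := by exact_mod_cast hn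
  have hN0 : (0 : ℝ) < n := by linarith
  set δ : ℝ := n / R with hδ
  set r : ℝ := R / (4 * n) with hr
  have hδ0 : 0 < δ := by positivity
  have hr0 : 0 < r := by positivity
  have hδr : δ * r = 1 / 4 := by rw [hδ, hr]; field_simp
  have hk : ∀ s, 0 ≤ s → s ≤ r → 1 + 3 / 4 * s ≤ prof δ s := fun s h0 h1 =>
    prof_lower h0 ((mul_le_mul_of_nonneg_left h1 hδ0.le).trans hδr.le)
  obtain ⟨x₀, y₀, hρ, hmax⟩ :=
    exists_twoPoint_max hu hv hupos hvpos hC₀ hgrowth hR hδ0 hδr.le hr0.le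
  refine (hmax x y hxy).trans ?_
  set ρ := ‖x₀ - y₀‖ with hρdef
  have hρ0 : 0 ≤ ρ := norm_nonneg _
  have hkρ := hk ρ hρ0 hρ
  have hkρ1 : 1 ≤ prof δ ρ := by linarith
  set ψ : ℝ → ℝ := fun s => 2 * Real.log (prof δ s) with hψ
  set a : Euc n → ℝ := fun z => Real.log (u z) - Real.log (wt R z) with ha
  set b : Euc n → ℝ := fun z => Real.log (v z) - Real.log (wt R z) with hb
  have ca : ContDiff ℝ (⊤ : ℕ∞) a :=
    (contDiff_log_comp hu hupos).sub (contDiff_log_comp (contDiff_wt R) (wt_pos R))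
  have cb : ContDiff ℝ (⊤ : ℕ∞) b :=
    (contDiff_log_comp hv hvpos).sub (contDiff_log_comp (contDiff_wt R) (wt_pos R))
  have hlog : ∀ x y : Euc n, ‖x - y‖ ≤ r →
      Real.log (u x / wt R x * (v y / wt R y) / prof δ ‖x - y‖ ^ 2) =
        a x + b y - ψ ‖x - y‖ := by
    intro x y h
    have h1 : 0 < prof δ ‖x - y‖ := by linarith [hk _ (norm_nonneg _) h, norm_nonneg (x - y)]
    have h2 := div_pos (hupos x) (wt_pos R x)
    have h3 := div_pos (hvpos y) (wt_pos R y)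
    rw [Real.log_div (by positivity) (by positivity), Real.log_mul h2.ne' h3.ne',
      Real.log_div (hupos x).ne' (wt_pos R x).ne', Real.log_div (hvpos y).ne' (wt_pos R y).ne',
      Real.log_pow]
    simp [ha, hb, hψ]
  have hmax' : ∀ x y, ‖x - y‖ ≤ r → a x + b y - ψ ‖x - y‖ ≤ a x₀ + b y₀ - ψ ‖x₀ - y₀‖ := by
    intro x y h
    rw [← hlog x y h, ← hlog x₀ y₀ hρ]
    refine Real.log_le_log ?_ (hmax x y h)
    have h1 : 0 < prof δ ‖x - y‖ := by linarith [hk _ (norm_nonneg _) h, norm_nonneg (x - y)]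
    have h2 := div_pos (hupos x) (wt_pos R x)
    have h3 := div_pos (hvpos y) (wt_pos R y)
    positivity
  have hψd : ∀ s, 0 < prof δ s → HasDerivAt ψ (2 * (1 - 2 * δ * s) / prof δ s) s := by
    intro s hs
    have := ((hasDerivAt_prof δ s).log hs.ne').const_mul 2
    convert! this using 1
    ring
  have hmono : MonotoneOn ψ (Icc 0 r) := by
    intro s hs t ht hst
    have h1 := hk s hs.1 hs.2
    have : prof δ s ≤ prof δ t := by
      have e1 : δ * t ≤ 1 / 4 := (mul_le_mul_of_nonneg_left ht.2 hδ0.le).trans hδr.le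
      have e2 : δ * s ≤ 1 / 4 := (mul_le_mul_of_nonneg_left hs.2 hδ0.le).trans hδr.le
      unfold prof
      nlinarith [mul_nonneg (sub_nonneg.2 hst) (by linarith : 0 ≤ 1 - δ * t - δ * s)]
    have hs0 := hs.1
    exact mul_le_mul_of_nonneg_left (Real.log_le_log (by linarith) this) (by norm_num)
  have bu : u x₀ / wt R x₀ ≤ C₀ * R := by
    rw [div_le_iff₀ (wt_pos R x₀)]
    have := mul_le_mul_of_nonneg_left (one_add_norm_le_wt hR x₀) hC₀.le
    linarith [hgrowth x₀, hvpos x₀]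
  have bv : v y₀ / wt R y₀ ≤ C₀ * R := by
    rw [div_le_iff₀ (wt_pos R y₀)]
    have := mul_le_mul_of_nonneg_left (one_add_norm_le_wt hR y₀) hC₀.le
    linarith [hgrowth y₀, hupos y₀]
  have hU0 := div_pos (hupos x₀) (wt_pos R x₀)
  have hV0 := div_pos (hvpos y₀) (wt_pos R y₀)
  -- The three cases: maximum on `|x - y| = r`, on the diagonal, or in between (impossible).
  rcases hρ.eq_or_lt with hρr | hρr
  · have h1 : 3 / 4 * r ≤ prof δ ρ := by rw [hρr] at hkρ ⊢; linarith
    have h2 : u x₀ / wt R x₀ * (v y₀ / wt R y₀) / prof δ ρ ^ 2 ≤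
        (C₀ * R) * (C₀ * R) / (3 / 4 * r) ^ 2 := by gcongr
    have h3 : (C₀ * R) * (C₀ * R) / (3 / 4 * r) ^ 2 = 256 / 9 * (n ^ 2 * C₀ ^ 2) := by
      rw [hr]; field_simp; ring
    have : (0:ℝ) ≤ n ^ 2 * C₀ ^ 2 := by positivity
    rw [h3] at h2
    linarith
  · have e1 : δ * ρ ≤ 1 / 4 := (mul_le_mul_of_nonneg_left hρ hδ0.le).trans hδr.le
    set k' : ℝ := 1 - 2 * δ * ρ with hk'
    have hk'0 : 0 ≤ k' := by rw [hk']; linarith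
    have hk'1 : k' ≤ 1 := by rw [hk']; nlinarith
    have hp : 0 ≤ 2 * k' / prof δ ρ := by positivity
    have gu := grad_div_le hu hupos hR0 x₀ hp
      (twoPoint_first ca hmono hρr (hψd ρ (by linarith)) hmax')
    have gv := grad_div_le hv hvpos hR0 y₀ hp
      (twoPoint_first (a := b) (b := a) (ψ := ψ) (r := r) (x₀ := y₀) (y₀ := x₀) cb hmono
        (by rwa [norm_sub_rev]) (by rw [norm_sub_rev]; exact hψd ρ (by linarith))
        (fun x y h => by
          rw [norm_sub_rev] at h
          have := hmax' y x h
          rw [norm_sub_rev x y, norm_sub_rev y₀ x₀]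
          linarith))
    have lu := lap_log_sub_ge hu hupos R x₀
    have lv := lap_log_sub_ge hv hvpos R y₀
    rw [hequ, mul_div_cancel_left₀ _ (hupos x₀).ne'] at lu
    rw [heqv, mul_div_cancel_left₀ _ (hvpos y₀).ne'] at lv
    have gu2 : (‖gradient u x₀‖ / u x₀) ^ 2 ≤ (2 * k' / prof δ ρ + 1 / R) ^ 2 := by
      have := (hupos x₀).le
      gcongr
    have gv2 : (‖gradient v y₀‖ / v y₀) ^ 2 ≤ (2 * k' / prof δ ρ + 1 / R) ^ 2 := by
      have := (hvpos y₀).le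
      gcongr
    have hsq1 : 0 < v x₀ ^ 2 := pow_pos (hvpos x₀) 2
    have hsq2 : 0 < u y₀ ^ 2 := pow_pos (hupos y₀) 2
    rcases hρ0.eq_or_lt with h0 | h0
    · have hxy0 : x₀ = y₀ := by
        rw [← sub_eq_zero, ← norm_eq_zero]; exact h0.symm
      subst hxy0
      have hd := twoPoint_diag ca cb (x₀ := x₀) fun x => by
        have := hmax' x x (by simpa using hr0.le)
        simpa using this
      have hk1 : prof δ ρ = 1 := by rw [← h0]; simp [prof]
      rw [hk1] at gu2 gv2 ⊢
      have hR1 : 1 / R ≤ 1 / 2 := by gcongr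
      have hR2 : 0 < 1 / R := by positivity
      have t1 : (2 * k' / 1 + 1 / R) ^ 2 ≤ 9 := by nlinarith
      have t2 : 2 * (n : ℝ) / R ^ 2 ≤ n := by
        rw [div_le_iff₀ (by positivity)]
        nlinarith [mul_le_mul_of_nonneg_left (by nlinarith : (2:ℝ) ≤ R ^ 2) hN0.le]
      have t3 : u x₀ * v x₀ ≤ 9 + 2 * n := by
        nlinarith [sq_nonneg (u x₀ - v x₀)]
      have t4 : u x₀ / wt R x₀ * (v x₀ / wt R x₀) ≤ u x₀ * v x₀ := by
        have := (hupos x₀).le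
        have := (hvpos x₀).le
        gcongr
        · exact div_le_self (by assumption) (one_le_wt R x₀)
        · exact div_le_self (by assumption) (one_le_wt R x₀)
      have : (0:ℝ) ≤ n ^ 2 * C₀ ^ 2 := by positivity
      simp only [one_pow, div_one]
      linarith
    · exfalso
      have hs := twoPoint_second (ψ := ψ) (ψ' := fun s => 2 * (1 - 2 * δ * s) / prof δ s)
        (q := 2 * (-2 * δ * prof δ ρ - k' ^ 2) / prof δ ρ ^ 2) ca cb hρr h0 ?_ ?_ hmax'
      · refine offdiag_contra (by linarith) hR hkρ1 ?_ hk'1 hδ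
          (h := ?_)
        · refine (prof_upper hδ0.le).trans ?_
          have : r ≤ R / 8 := by rw [hr]; gcongr; linarith
          linarith
        · have : 2 * (n : ℝ) / R ^ 2 + 2 * (n : ℝ) / R ^ 2 = 4 * n / R ^ 2 := by ring
          linarith
      · have hc : ContinuousAt (prof δ) ρ := (hasDerivAt_prof δ ρ).continuousAt
        have : ∀ᶠ s in 𝓝 ρ, 0 < prof δ s := hc.eventually (lt_mem_nhds (by linarith))
        exact this.mono fun s hs => hψd s hs
      · have h1 : HasDerivAt (fun s : ℝ => 2 * (1 - 2 * δ * s)) (-(4 * δ)) ρ := by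
          have := (((hasDerivAt_id ρ).const_mul (2 * δ)).const_sub 1).const_mul 2
          convert! this using 1
          ring
        have h2 := h1.div (hasDerivAt_prof δ ρ) (by linarith)
        convert! h2 using 1
        rw [hk']
        ring

/-- The two-point product bound, from `weighted_bound` as `R → ∞`. -/
lemma product_bound {n : ℕ} (hn : 2 ≤ n) {u v : Euc n → ℝ} (hu : ContDiff ℝ (⊤ : ℕ∞) u)
    (hv : ContDiff ℝ (⊤ : ℕ∞) v) (hupos : ∀ x, 0 < u x) (hvpos : ∀ x, 0 < v x)
    (hequ : ∀ x, lap u x = u x * v x ^ 2) (heqv : ∀ x, lap v x = v x * u x ^ 2)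
    {C₀ : ℝ} (hC₀ : 0 < C₀) (hgrowth : ∀ x, u x + v x ≤ C₀ * (1 + ‖x‖)) :
    ∃ C₁ : ℝ, 1 ≤ C₁ ∧ ∀ x y, u x * v y ≤ C₁ * (1 + ‖x - y‖) ^ 2 := by
  have hN : (2 : ℝ) ≤ n := by exact_mod_cast hn
  have hN0 : (0 : ℝ) < n := by linarith
  set C₁ : ℝ := 36 * n ^ 2 * C₀ ^ 2 + 9 + 2 * n with hC₁
  have hC₁' : 1 ≤ C₁ := by
    have : (0:ℝ) ≤ n ^ 2 * C₀ ^ 2 := by positivity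
    linarith
  refine ⟨C₁, hC₁', fun x y => ?_⟩
  have hw : ∀ z : Euc n, Tendsto (fun R : ℝ => wt R z) atTop (𝓝 1) := by
    intro z
    have : Tendsto (fun R : ℝ => 1 + ‖z‖ ^ 2 / R ^ 2) atTop (𝓝 (1 + 0)) :=
      tendsto_const_nhds.add (tendsto_const_nhds.div_atTop (tendsto_pow_atTop two_ne_zero))
    simpa [wt] using this
  have hlim : Tendsto (fun R : ℝ => C₁ * (1 + ‖x - y‖) ^ 2 * (wt R x * wt R y)) atTop
      (𝓝 (C₁ * (1 + ‖x - y‖) ^ 2 * (1 * 1))) :=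
    tendsto_const_nhds.mul ((hw x).mul (hw y))
  rw [mul_one, mul_one] at hlim
  refine ge_of_tendsto hlim ?_
  filter_upwards [eventually_ge_atTop 2, eventually_ge_atTop (4 * n * ‖x - y‖)] with R h2 h4
  have hR0 : 0 < R := by linarith
  have hxy : ‖x - y‖ ≤ R / (4 * n) := by rw [le_div_iff₀ (by positivity)]; linarith
  have h := weighted_bound hn hu hv hupos hvpos hequ heqv hC₀ hgrowth h2 hxy
  have hδ : (n : ℝ) / R * ‖x - y‖ ≤ 1 / 4 := by
    rw [div_mul_eq_mul_div, div_le_iff₀ hR0]; linarith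
  have hp1 := prof_lower (norm_nonneg (x - y)) hδ
  have hp2 : prof (n / R) ‖x - y‖ ≤ 1 + ‖x - y‖ := prof_upper (by positivity)
  have hp0 : 0 < prof (n / R) ‖x - y‖ := by linarith [norm_nonneg (x - y)]
  have hwx := wt_pos R x
  have hwy := wt_pos R y
  rw [div_le_iff₀ (by positivity), div_mul_div_comm, div_le_iff₀ (by positivity)] at h
  refine h.trans ?_
  gcongr

/-! ### A subsolution controlling the product of gradients -/

/-- The function `K (φ(a) + φ(b)) + (ab)²` with `φ(s) = s - log (1 + s)`: it grows only linearly
in `a` and `b` when `ab` is bounded, while its Laplacian controls `|∇a| |∇b|`. -/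
noncomputable def auxF {n : ℕ} (K : ℝ) (a b : Euc n → ℝ) (y : Euc n) : ℝ :=
  K * ((a y - Real.log (1 + a y)) + (b y - Real.log (1 + b y))) + (a y * b y) ^ 2

lemma contDiff_auxF {n : ℕ} {a b : Euc n → ℝ} (K : ℝ) (ha : ContDiff ℝ (⊤ : ℕ∞) a)
    (hb : ContDiff ℝ (⊤ : ℕ∞) b) (hapos : ∀ x, 0 < a x) (hbpos : ∀ x, 0 < b x) :
    ContDiff ℝ (⊤ : ℕ∞) (auxF K a b) := by
  have h1 := contDiff_log_comp (contDiff_const.add ha) (fun x => add_pos one_pos (hapos x))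
  have h2 := contDiff_log_comp (contDiff_const.add hb) (fun x => add_pos one_pos (hbpos x))
  exact (contDiff_const.mul ((ha.sub h1).add (hb.sub h2))).add ((ha.mul hb).pow 2)

lemma hasDerivAt_phi {g : ℝ → ℝ} {g' t : ℝ} (h : HasDerivAt g g' t) (hpos : 0 < g t) :
    HasDerivAt (fun s => g s - Real.log (1 + g s)) (g' * (g t / (1 + g t))) t := by
  have h1 := h.sub ((h.const_add 1).log (by linarith))
  convert! h1 using 1
  have : 1 + g t ≠ 0 := by linarith
  field_simp
  ring

lemma dirD_auxF {n : ℕ} {a b : Euc n → ℝ} (K : ℝ) (ha : ContDiff ℝ (⊤ : ℕ∞) a)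
    (hb : ContDiff ℝ (⊤ : ℕ∞) b) (hapos : ∀ x, 0 < a x) (hbpos : ∀ x, 0 < b x) (e x : Euc n) :
    dirD (auxF K a b) e x =
      K * (dirD a e x * (a x / (1 + a x)) + dirD b e x * (b x / (1 + b x))) +
        2 * (a x * b x) * (dirD a e x * b x + a x * dirD b e x) := by
  have h1 := hasDerivAt_line (contDiff_auxF K ha hb hapos hbpos) x e 0
  have ha1 := hasDerivAt_line ha x e 0
  have hb1 := hasDerivAt_line hb x e 0
  have h2 := (((hasDerivAt_phi ha1 (hapos _)).add (hasDerivAt_phi hb1 (hbpos _))).const_mul K).add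
    ((ha1.mul hb1).pow 2)
  have h3 := h1.unique h2
  simpa using h3

lemma dirD2_auxF {n : ℕ} {a b : Euc n → ℝ} (K : ℝ) (ha : ContDiff ℝ (⊤ : ℕ∞) a)
    (hb : ContDiff ℝ (⊤ : ℕ∞) b) (hapos : ∀ x, 0 < a x) (hbpos : ∀ x, 0 < b x) (e x : Euc n) :
    dirD2 (auxF K a b) e x =
      (K * (a x / (1 + a x)) + 2 * a x * b x ^ 2) * dirD2 a e x +
      (K * (b x / (1 + b x)) + 2 * b x * a x ^ 2) * dirD2 b e x +
      (K / (1 + a x) ^ 2 + 2 * b x ^ 2) * dirD a e x ^ 2 +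
      (K / (1 + b x) ^ 2 + 2 * a x ^ 2) * dirD b e x ^ 2 +
      8 * (a x * b x) * (dirD a e x * dirD b e x) := by
  have h1 := hasDerivAt_line2 (contDiff_auxF K ha hb hapos hbpos) x e 0
  have h4 : (fun s : ℝ => dirD (auxF K a b) e (x + s • e)) = fun s : ℝ => _ :=
    funext fun s => dirD_auxF K ha hb hapos hbpos e (x + s • e)
  rw [h4] at h1
  have ha1 := hasDerivAt_line ha x e 0
  have hb1 := hasDerivAt_line hb x e 0
  have ha2 := hasDerivAt_line2 ha x e 0
  have hb2 := hasDerivAt_line2 hb x e 0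
  have pa : 0 < 1 + a (x + (0 : ℝ) • e) := by linarith [hapos (x + (0 : ℝ) • e)]
  have pb : 0 < 1 + b (x + (0 : ℝ) • e) := by linarith [hbpos (x + (0 : ℝ) • e)]
  have h2 := (((ha2.mul (ha1.div (ha1.const_add 1) pa.ne')).add
    (hb2.mul (hb1.div (hb1.const_add 1) pb.ne'))).const_mul K).add
    (((ha1.mul hb1).const_mul 2).mul ((ha2.mul hb1).add (ha1.mul hb2)))
  have h3 := h1.unique h2
  simp only [zero_smul, add_zero, Pi.mul_apply, Pi.add_apply, Pi.div_apply] at h3 pa pb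
  rw [h3]
  field_simp
  ring

/-- Lower bound for the product of the coefficients of `|∇a|²` and `|∇b|²` in `Δ (auxF K a b)`. -/
lemma coeff_prod_ge {a b K : ℝ} (ha : 0 < a) (hb : 0 < b) (hK : 1 ≤ K) :
    K / 16 ≤ (K / (1 + a) ^ 2 + 2 * b ^ 2) * (K / (1 + b) ^ 2 + 2 * a ^ 2) := by
  have large : ∀ s t : ℝ, 0 < s → 0 < t → 1 ≤ t →
      K / 16 ≤ (K / (1 + s) ^ 2 + 2 * t ^ 2) * (K / (1 + t) ^ 2 + 2 * s ^ 2) := by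
    intro s t hs ht h
    calc K / 16 ≤ 2 * t ^ 2 * (K / (2 * t) ^ 2) := by
          have : 2 * t ^ 2 * (K / (2 * t) ^ 2) = K / 2 := by field_simp
          rw [this]; linarith
      _ ≤ 2 * t ^ 2 * (K / (1 + t) ^ 2) := by gcongr; linarith
      _ ≤ _ := by
          gcongr
          · have : 0 ≤ K / (1 + s) ^ 2 := by positivity
            linarith
          · have : 0 ≤ 2 * s ^ 2 := by positivity
            linarith
  rcases le_total 1 b with h | h
  · exact large a b ha hb h
  rcases le_total 1 a with h' | h'
  · rw [mul_comm]; exact large b a hb ha h'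
  · have e1 : K / 4 ≤ K / (1 + a) ^ 2 + 2 * b ^ 2 := by
      have : K / 4 ≤ K / (1 + a) ^ 2 := by gcongr; nlinarith
      nlinarith
    have e2 : K / 4 ≤ K / (1 + b) ^ 2 + 2 * a ^ 2 := by
      have : K / 4 ≤ K / (1 + b) ^ 2 := by gcongr; nlinarith
      nlinarith
    calc K / 16 ≤ K / 4 * (K / 4) := by nlinarith
      _ ≤ _ := by gcongr

lemma quad_ge {A B X Y M : ℝ} (hA : 0 ≤ A) (hB : 0 ≤ B)
    (h : M ^ 2 / 4 ≤ A * B) : M * (X * Y) ≤ A * X ^ 2 + B * Y ^ 2 := by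
  refine le_of_sq_le_sq ?_ (by positivity)
  have h1 : M ^ 2 * (X * Y) ^ 2 ≤ 4 * (A * B) * (X * Y) ^ 2 := by gcongr; linarith
  nlinarith [sq_nonneg (A * X ^ 2 - B * Y ^ 2)]

/-- If `a, b` are positive and subharmonic with `ab ≤ C₁`, then `Δ (auxF K a b) ≥ |∇a| |∇b|` for
`K = (16 C₁ + 2)²`. -/
lemma lap_auxF_ge {n : ℕ} {a b : Euc n → ℝ} {C₁ : ℝ} (ha : ContDiff ℝ (⊤ : ℕ∞) a)
    (hb : ContDiff ℝ (⊤ : ℕ∞) b) (hapos : ∀ x, 0 < a x) (hbpos : ∀ x, 0 < b x)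
    (hC₁ : 0 ≤ C₁) (x : Euc n) (hla : 0 ≤ lap a x) (hlb : 0 ≤ lap b x) (hab : a x * b x ≤ C₁) :
    ‖gradient a x‖ * ‖gradient b x‖ ≤ lap (auxF ((16 * C₁ + 2) ^ 2) a b) x := by
  set K := (16 * C₁ + 2) ^ 2 with hK
  have hK1 : 1 ≤ K := by nlinarith
  let B := EuclideanSpace.basisFun (Fin n) ℝ
  have hc : ∑ i, dirD a (B i) x * dirD b (B i) x = inner ℝ (gradient a x) (gradient b x) := by
    rw [← B.sum_inner_mul_inner]
    refine Finset.sum_congr rfl fun i _ => ?_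
    rw [dirD_eq_inner ha, dirD_eq_inner hb, real_inner_comm (gradient b x)]
  have e : lap (auxF K a b) x =
      (K * (a x / (1 + a x)) + 2 * a x * b x ^ 2) * lap a x +
      (K * (b x / (1 + b x)) + 2 * b x * a x ^ 2) * lap b x +
      (K / (1 + a x) ^ 2 + 2 * b x ^ 2) * ‖gradient a x‖ ^ 2 +
      (K / (1 + b x) ^ 2 + 2 * a x ^ 2) * ‖gradient b x‖ ^ 2 +
      8 * (a x * b x) * inner ℝ (gradient a x) (gradient b x) := by
    rw [lap_eq_sum (contDiff_auxF K ha hb hapos hbpos) B, lap_eq_sum ha B, lap_eq_sum hb B,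
      ← sum_dirD_sq ha B, ← sum_dirD_sq hb B, ← hc]
    simp_rw [dirD2_auxF K ha hb hapos hbpos, Finset.sum_add_distrib, Finset.mul_sum]
  have pa := hapos x
  have pb := hbpos x
  have hin := abs_le.1 (abs_real_inner_le_norm (gradient a x) (gradient b x))
  set X := ‖gradient a x‖
  set Y := ‖gradient b x‖
  have hX : 0 ≤ X := norm_nonneg _
  have hY : 0 ≤ Y := norm_nonneg _
  have q := quad_ge (A := K / (1 + a x) ^ 2 + 2 * b x ^ 2) (B := K / (1 + b x) ^ 2 + 2 * a x ^ 2)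
    (M := 8 * C₁ + 1) (X := X) (Y := Y) (by positivity) (by positivity) (by
      refine le_trans (le_of_eq ?_) (coeff_prod_ge pa pb hK1)
      rw [hK]; ring)
  have r1 : 0 ≤ (K * (a x / (1 + a x)) + 2 * a x * b x ^ 2) * lap a x := by positivity
  have r2 : 0 ≤ (K * (b x / (1 + b x)) + 2 * b x * a x ^ 2) * lap b x := by positivity
  have r3 : -(8 * C₁ * (X * Y)) ≤ 8 * (a x * b x) * inner ℝ (gradient a x) (gradient b x) := by
    have s1 : 8 * (a x * b x) * (X * Y) ≤ 8 * C₁ * (X * Y) := by gcongr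
    have s2 := mul_le_mul_of_nonneg_left hin.1 (by positivity : 0 ≤ 8 * (a x * b x))
    linarith
  rw [e]
  linarith

lemma auxF_bound {n : ℕ} {a b : Euc n → ℝ} {K C₁ S : ℝ} (hK : 0 ≤ K) {x : Euc n}
    (hapos : 0 < a x) (hbpos : 0 < b x) (ha : a x ≤ S) (hb : b x ≤ S) (hab : a x * b x ≤ C₁) :
    |auxF K a b x| ≤ 2 * K * S + C₁ ^ 2 := by
  have phi : ∀ s : ℝ, 0 < s → 0 ≤ s - Real.log (1 + s) ∧ s - Real.log (1 + s) ≤ s := by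
    intro s hs
    have h1 := Real.log_le_sub_one_of_pos (by linarith : 0 < 1 + s)
    have h2 := Real.log_nonneg (by linarith : 1 ≤ 1 + s)
    constructor <;> linarith
  obtain ⟨a1, a2⟩ := phi _ hapos
  obtain ⟨b1, b2⟩ := phi _ hbpos
  have h0 : 0 ≤ auxF K a b x := by unfold auxF; positivity
  rw [abs_of_nonneg h0]
  unfold auxF
  have h1 : (a x * b x) ^ 2 ≤ C₁ ^ 2 := by gcongr
  have h2 := mul_le_mul_of_nonneg_left (by linarith :
    (a x - Real.log (1 + a x)) + (b x - Real.log (1 + b x)) ≤ 2 * S) hK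
  linarith

/-! ### Cutoffs and Green's identity -/

lemma integral_dirD_mul {n : ℕ} {f η : Euc n → ℝ} (hf : ContDiff ℝ (⊤ : ℕ∞) f)
    (hη : ContDiff ℝ (⊤ : ℕ∞) η) (hc : HasCompactSupport η) (e : Euc n) :
    ∫ y, η y * dirD f e y = -∫ y, dirD η e y * f y := by
  have c1 : HasCompactSupport (dirD η e) := hc.fderiv_apply (𝕜 := ℝ) e
  have k1 := (contDiff_dirD hη e).continuous
  have k2 := (contDiff_dirD hf e).continuous
  refine integral_mul_fderiv_eq_neg_fderiv_mul_of_integrable (f := η) (g := f) ?_ ?_ ?_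
    (fun y _ => hη.differentiable (by simp) y) (fun y _ => hf.differentiable (by simp) y)
  · exact (k1.mul hf.continuous).integrable_of_hasCompactSupport c1.mul_right
  · exact (hη.continuous.mul k2).integrable_of_hasCompactSupport hc.mul_right
  · exact (hη.continuous.mul hf.continuous).integrable_of_hasCompactSupport hc.mul_right

lemma contDiff_lap {n : ℕ} {f : Euc n → ℝ} (hf : ContDiff ℝ (⊤ : ℕ∞) f) :
    ContDiff ℝ (⊤ : ℕ∞) (lap f) := by
  have : lap f = fun x => ∑ i, dirD (dirD f (EuclideanSpace.basisFun (Fin n) ℝ i))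
      (EuclideanSpace.basisFun (Fin n) ℝ i) x := by
    funext x; exact lap_eq_sum hf (EuclideanSpace.basisFun (Fin n) ℝ) x
  rw [this]
  exact ContDiff.sum fun i _ => contDiff_dirD (contDiff_dirD hf _) _

/-- Green's identity against a test function. -/
lemma integral_mul_lap {n : ℕ} {f η : Euc n → ℝ} (hf : ContDiff ℝ (⊤ : ℕ∞) f)
    (hη : ContDiff ℝ (⊤ : ℕ∞) η) (hc : HasCompactSupport η) :
    ∫ y, η y * lap f y = ∫ y, lap η y * f y := by
  let B := EuclideanSpace.basisFun (Fin n) ℝ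
  have c1 : ∀ e, HasCompactSupport (dirD η e) := fun e => hc.fderiv_apply (𝕜 := ℝ) e
  have c2 : ∀ e, HasCompactSupport (dirD (dirD η e) e) := fun e => (c1 e).fderiv_apply (𝕜 := ℝ) e
  have h1 : ∀ y, η y * lap f y = ∑ i, η y * dirD (dirD f (B i)) (B i) y := by
    intro y; rw [lap_eq_sum hf B, Finset.mul_sum]; rfl
  have h2 : ∀ y, lap η y * f y = ∑ i, dirD (dirD η (B i)) (B i) y * f y := by
    intro y; rw [lap_eq_sum hη B, Finset.sum_mul]; rfl
  simp_rw [h1, h2]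
  rw [integral_finsetSum, integral_finsetSum]
  · refine Finset.sum_congr rfl fun i _ => ?_
    rw [integral_dirD_mul (contDiff_dirD hf _) hη hc,
      integral_dirD_mul hf (contDiff_dirD hη _) (c1 _), neg_neg]
  · intro i _
    exact ((contDiff_dirD (contDiff_dirD hη _) _).continuous.mul
      hf.continuous).integrable_of_hasCompactSupport (c2 _).mul_right
  · intro i _
    exact (hη.continuous.mul
      (contDiff_dirD (contDiff_dirD hf _) _).continuous).integrable_of_hasCompactSupport
      hc.mul_right

lemma dirD_rescale {n : ℕ} {χ : Euc n → ℝ} (hχ : ContDiff ℝ (⊤ : ℕ∞) χ) (c : ℝ) (x e y : Euc n) :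
    dirD (fun y => χ (c • (y - x))) e y = c * dirD χ e (c • (y - x)) := by
  have h1 : HasFDerivAt (fun y : Euc n => c • (y - x)) (c • ContinuousLinearMap.id ℝ (Euc n)) y :=
    ((hasFDerivAt_id y).sub_const x).const_smul c
  have h2 := ((hχ.differentiable (by simp) (c • (y - x))).hasFDerivAt.comp y h1).fderiv
  unfold dirD
  have h3 : (χ ∘ fun y => c • (y - x)) = fun y => χ (c • (y - x)) := rfl
  rw [h3] at h2
  rw [h2]
  simp

lemma contDiff_rescale {n : ℕ} {χ : Euc n → ℝ} (hχ : ContDiff ℝ (⊤ : ℕ∞) χ) (c : ℝ) (x : Euc n) :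
    ContDiff ℝ (⊤ : ℕ∞) (fun y => χ (c • (y - x))) :=
  hχ.comp ((contDiff_id.sub contDiff_const).const_smul c)

lemma lap_rescale {n : ℕ} {χ : Euc n → ℝ} (hχ : ContDiff ℝ (⊤ : ℕ∞) χ) (c : ℝ) (x y : Euc n) :
    lap (fun y => χ (c • (y - x))) y = c ^ 2 * lap χ (c • (y - x)) := by
  let B := EuclideanSpace.basisFun (Fin n) ℝ
  rw [lap_eq_sum (contDiff_rescale hχ c x) B, lap_eq_sum hχ B, Finset.mul_sum]
  refine Finset.sum_congr rfl fun i _ => ?_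
  change dirD (dirD (fun y => χ (c • (y - x))) (B i)) (B i) y =
    c ^ 2 * dirD (dirD χ (B i)) (B i) (c • (y - x))
  have h : dirD (fun y => χ (c • (y - x))) (B i) =
      fun y => c * dirD χ (B i) (c • (y - x)) := funext fun y => dirD_rescale hχ c x _ y
  have h5 := dirD_rescale (contDiff_dirD hχ (B i)) c x (B i) y
  rw [h]
  have hd := (contDiff_rescale (contDiff_dirD hχ (B i)) c x).differentiable (by simp) y
  have h6 : dirD (fun y => c * dirD χ (B i) (c • (y - x))) (B i) y =
      c * dirD (fun y => dirD χ (B i) (c • (y - x))) (B i) y := by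
    unfold dirD at hd ⊢
    rw [fderiv_const_mul hd]
    rfl
  rw [h6, h5]
  ring

/-- A family of cutoffs: `η = 1` on `B_R(x)`, supported in the closed ball of radius `2R`, and
`|Δη| ≤ M R⁻²` with `M` independent of `x` and `R`. -/
lemma exists_cutoff (n : ℕ) : ∃ M : ℝ, 0 ≤ M ∧ ∀ (x : Euc n) (R : ℝ), 0 < R →
    ∃ η : Euc n → ℝ, ContDiff ℝ (⊤ : ℕ∞) η ∧ HasCompactSupport η ∧ (∀ y, 0 ≤ η y) ∧
      (∀ y ∈ ball x R, η y = 1) ∧ (∀ y, |lap η y| ≤ M / R ^ 2) ∧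
      ∀ y, y ∉ closedBall x (2 * R) → lap η y = 0 := by
  let χ : ContDiffBump (0 : Euc n) := ⟨1, 2, one_pos, one_lt_two⟩
  have hχ : ContDiff ℝ (⊤ : ℕ∞) χ := χ.contDiff
  have hlap0 : ∀ z, z ∉ closedBall (0 : Euc n) 2 → lap χ z = 0 := by
    intro z hz
    have hz' : z ∉ tsupport χ := by rw [χ.tsupport_eq]; exact hz
    have c1 : ∀ e, tsupport (dirD (dirD χ e) e) ⊆ tsupport χ := fun e =>
      (tsupport_fderiv_apply_subset ℝ e).trans (tsupport_fderiv_apply_subset ℝ e)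
    rw [lap_eq_sum hχ (EuclideanSpace.basisFun (Fin n) ℝ)]
    refine Finset.sum_eq_zero fun i _ => ?_
    exact image_eq_zero_of_notMem_tsupport fun h => hz' (c1 _ h)
  have hcs : HasCompactSupport (lap χ) :=
    HasCompactSupport.intro (isCompact_closedBall 0 2) hlap0
  obtain ⟨M, hM⟩ := (contDiff_lap hχ).continuous.bounded_above_of_compact_support hcs
  refine ⟨M, (norm_nonneg _).trans (hM 0), fun x R hR => ?_⟩
  have hnorm : ∀ y, ‖R⁻¹ • (y - x)‖ = dist y x / R := fun y => by
    rw [norm_smul, norm_inv, Real.norm_of_nonneg hR.le, dist_eq_norm, inv_mul_eq_div]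
  refine ⟨fun y => χ (R⁻¹ • (y - x)), contDiff_rescale hχ _ _, ?_, fun y => χ.nonneg, ?_, ?_, ?_⟩
  · refine HasCompactSupport.intro (isCompact_closedBall x (2 * R)) fun y hy => ?_
    refine χ.zero_of_le_dist ?_
    rw [dist_zero_right, hnorm, le_div_iff₀ hR]
    simp only [mem_closedBall, not_le] at hy
    exact hy.le
  · intro y hy
    refine χ.one_of_mem_closedBall ?_
    rw [mem_closedBall_zero_iff, hnorm, div_le_iff₀ hR]
    have := mem_ball.1 hy
    change _ ≤ 1 * R
    linarith
  · intro y
    rw [lap_rescale hχ, abs_mul, abs_of_nonneg (by positivity), inv_pow, inv_mul_eq_div]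
    gcongr
    exact hM _
  · intro y hy
    rw [lap_rescale hχ, hlap0, mul_zero]
    rw [mem_closedBall_zero_iff, hnorm, div_le_iff₀ hR]
    simpa using hy

/-! ### Balancing the components and the final estimate -/

lemma norm_gradient_const_mul {n : ℕ} {f : Euc n → ℝ} (hf : ContDiff ℝ (⊤ : ℕ∞) f) {c : ℝ}
    (hc : 0 < c) (y : Euc n) :
    ‖gradient (fun z => c * f z) y‖ = c * ‖gradient f y‖ := by
  unfold gradient
  rw [fderiv_const_mul (hf.differentiable (by simp) y), map_smulₛₗ, norm_smul]
  simp [abs_of_pos hc]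

lemma lap_const_mul {n : ℕ} {f : Euc n → ℝ} (hf : ContDiff ℝ (⊤ : ℕ∞) f) (c : ℝ) (y : Euc n) :
    lap (fun z => c * f z) y = c * lap f y := by
  let B := EuclideanSpace.basisFun (Fin n) ℝ
  have hd : ∀ {g : Euc n → ℝ}, ContDiff ℝ (⊤ : ℕ∞) g → ∀ e z,
      dirD (fun z => c * g z) e z = c * dirD g e z := by
    intro g hg e z
    unfold dirD
    rw [fderiv_const_mul (hg.differentiable (by simp) z)]
    rfl
  rw [lap_eq_sum (contDiff_const.mul hf) B, lap_eq_sum hf B, Finset.mul_sum]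
  refine Finset.sum_congr rfl fun i _ => ?_
  change dirD (dirD (fun z => c * f z) (B i)) (B i) y = c * dirD (dirD f (B i)) (B i) y
  rw [show dirD (fun z => c * f z) (B i) = fun z => c * dirD f (B i) z from
    funext fun z => hd hf _ z, hd (contDiff_dirD hf _)]

/-- A rescaling `a = c u`, `b = c⁻¹ v` balancing the two components on `B_{2R}(x)`: it makes
both maxima equal to the square root of `(max u)(max v)`, which the two-point bound controls. -/
lemma exists_balance {n : ℕ} {u v : Euc n → ℝ} (hu : Continuous u) (hv : Continuous v)
    (hupos : ∀ x, 0 < u x) (hvpos : ∀ x, 0 < v x) {C₁ : ℝ} (hC₁ : 1 ≤ C₁)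
    (hprod : ∀ x y, u x * v y ≤ C₁ * (1 + ‖x - y‖) ^ 2) (x : Euc n) {R : ℝ} (hR : 0 < R) :
    ∃ c : ℝ, 0 < c ∧ ∀ y ∈ closedBall x (2 * R),
      c * u y ≤ C₁ * (1 + 4 * R) ∧ c⁻¹ * v y ≤ C₁ * (1 + 4 * R) := by
  have hne : (closedBall x (2 * R)).Nonempty := ⟨x, mem_closedBall_self (by positivity)⟩
  obtain ⟨p, hp, hpm⟩ := (isCompact_closedBall x (2 * R)).exists_isMaxOn hne hu.continuousOn
  obtain ⟨q, hq, hqm⟩ := (isCompact_closedBall x (2 * R)).exists_isMaxOn hne hv.continuousOn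
  have pu := hupos p
  have pv := hvpos q
  have hpq : ‖p - q‖ ≤ 4 * R := by
    rw [← dist_eq_norm]
    have := dist_triangle_right p q x
    have := mem_closedBall.1 hp
    have := mem_closedBall.1 hq
    linarith
  have h1 : u p * v q ≤ (C₁ * (1 + 4 * R)) ^ 2 := by
    calc u p * v q ≤ C₁ * (1 + ‖p - q‖) ^ 2 := hprod p q
      _ ≤ C₁ * (1 + 4 * R) ^ 2 := by gcongr
      _ ≤ C₁ ^ 2 * (1 + 4 * R) ^ 2 := by gcongr; nlinarith
      _ = _ := by ring
  set c := √(v q / u p) with hc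
  have hc0 : 0 < c := Real.sqrt_pos.2 (by positivity)
  have hc2 : c ^ 2 = v q / u p := Real.sq_sqrt (by positivity)
  refine ⟨c, hc0, fun y hy => ⟨?_, ?_⟩⟩
  · have : c * u y ≤ c * u p := mul_le_mul_of_nonneg_left (hpm hy) hc0.le
    refine this.trans (le_of_sq_le_sq ?_ (by positivity))
    rw [mul_pow, hc2]
    refine le_trans (le_of_eq ?_) h1
    field_simp
  · have : c⁻¹ * v y ≤ c⁻¹ * v q := mul_le_mul_of_nonneg_left (hqm hy) (by positivity)
    refine this.trans (le_of_sq_le_sq ?_ (by positivity))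
    rw [mul_pow, inv_pow, hc2]
    refine le_trans (le_of_eq ?_) h1
    field_simp

theorem gradient_product_bound (n : ℕ) (hn : 2 ≤ n)
    (u v : Euc n → ℝ)
    (hu : ContDiff ℝ (⊤ : ℕ∞) u) (hv : ContDiff ℝ (⊤ : ℕ∞) v)
    (hupos : ∀ x, 0 < u x) (hvpos : ∀ x, 0 < v x)
    (hequ : ∀ x, lap u x = u x * v x ^ 2)
    (heqv : ∀ x, lap v x = v x * u x ^ 2)
    (C₀ : ℝ) (hC₀ : 0 < C₀)
    (hgrowth : ∀ x, u x + v x ≤ C₀ * (1 + ‖x‖)) :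
    ∃ C > (0 : ℝ), ∀ R > (1 : ℝ), ∀ x : Euc n,
      ∫ y in ball x R, ‖gradient u y‖ * ‖gradient v y‖ ≤ C * R ^ ((n : ℝ) - 1) := by
  obtain ⟨C₁, hC₁, hprod⟩ := product_bound hn hu hv hupos hvpos hequ heqv hC₀ hgrowth
  obtain ⟨M, hM0, hcut⟩ := exists_cutoff n
  set K : ℝ := (16 * C₁ + 2) ^ 2 with hK
  set ω : ℝ := volume.real (ball (0 : Euc n) 1) with hω
  have hω0 : 0 ≤ ω := measureReal_nonneg
  set C : ℝ := M * (10 * K * C₁ + C₁ ^ 2) * (2 ^ n * ω) with hC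
  have hC0 : 0 ≤ C := by positivity
  refine ⟨C + 1, by linarith, fun R hR x => ?_⟩
  have hR0 : 0 < R := by linarith
  obtain ⟨c, hc0, hbal⟩ :=
    exists_balance hu.continuous hv.continuous hupos hvpos hC₁ hprod x hR0
  obtain ⟨η, hη, hηc, hη0, hη1, hηM, hηs⟩ := hcut x R hR0
  set a : Euc n → ℝ := fun y => c * u y with ha
  set b : Euc n → ℝ := fun y => c⁻¹ * v y with hb
  have ca : ContDiff ℝ (⊤ : ℕ∞) a := contDiff_const.mul hu
  have cb : ContDiff ℝ (⊤ : ℕ∞) b := contDiff_const.mul hv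
  have pa : ∀ y, 0 < a y := fun y => mul_pos hc0 (hupos y)
  have pb : ∀ y, 0 < b y := fun y => mul_pos (inv_pos.2 hc0) (hvpos y)
  have hab : ∀ y, a y * b y ≤ C₁ := fun y => by
    have h := hprod y y
    have e : a y * b y = u y * v y := by simp only [ha, hb]; field_simp
    rw [e]; simpa using h
  have cF := contDiff_auxF K ca cb pa pb
  have hlap : ∀ y, ‖gradient u y‖ * ‖gradient v y‖ ≤ lap (auxF K a b) y := by
    intro y
    have h := lap_auxF_ge (C₁ := C₁) ca cb pa pb (by linarith) y ?_ ?_ (hab y)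
    · rw [norm_gradient_const_mul hu hc0, norm_gradient_const_mul hv (inv_pos.2 hc0)] at h
      refine le_trans (le_of_eq ?_) h
      field_simp
    · rw [lap_const_mul hu, hequ]
      have := hupos y
      positivity
    · rw [lap_const_mul hv, heqv]
      have := hvpos y
      positivity
  have hnn : ∀ y, 0 ≤ lap (auxF K a b) y := fun y => le_trans (by positivity) (hlap y)
  have hIntegrable : Integrable fun y => η y * lap (auxF K a b) y :=
    (hη.continuous.mul (contDiff_lap cF).continuous).integrable_of_hasCompactSupport hηc.mul_right
  have step1 : ∫ y in ball x R, ‖gradient u y‖ * ‖gradient v y‖ ≤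
      ∫ y, η y * lap (auxF K a b) y := by
    calc ∫ y in ball x R, ‖gradient u y‖ * ‖gradient v y‖
        ≤ ∫ y in ball x R, η y * lap (auxF K a b) y := by
          refine integral_mono_of_nonneg (Eventually.of_forall fun y => by positivity)
            hIntegrable.integrableOn ?_
          refine (ae_restrict_iff' measurableSet_ball).2 (Eventually.of_forall fun y hy => ?_)
          simp only [hη1 y hy, one_mul]
          exact hlap y
      _ ≤ _ := setIntegral_le_integral hIntegrable
          (Eventually.of_forall fun y => mul_nonneg (hη0 y) (hnn y))
  have step2 : ∫ y, lap η y * auxF K a b y ≤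
      M / R ^ 2 * (2 * K * (C₁ * (1 + 4 * R)) + C₁ ^ 2) * ((2 * R) ^ n * ω) := by
    have e1 : ∫ y, lap η y * auxF K a b y =
        ∫ y in closedBall x (2 * R), lap η y * auxF K a b y := by
      rw [setIntegral_eq_integral_of_forall_compl_eq_zero]
      intro y hy
      rw [hηs y hy, zero_mul]
    rw [e1]
    have hvol : volume.real (closedBall x (2 * R)) = (2 * R) ^ n * ω := by
      rw [Measure.addHaar_real_closedBall _ _ (by positivity), finrank_euclideanSpace_fin]
    rw [← hvol]
    refine (le_abs_self _).trans ?_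
    rw [← Real.norm_eq_abs]
    refine norm_setIntegral_le_of_norm_le_const measure_closedBall_lt_top fun y hy => ?_
    rw [norm_mul, Real.norm_eq_abs, Real.norm_eq_abs]
    have := auxF_bound (K := K) (by positivity) (pa y) (pb y) (hbal y hy).1 (hbal y hy).2 (hab y)
    have h3 := hηM y
    gcongr
  have hpow : R ^ ((n : ℝ) - 1) = R ^ n / R := by
    rw [Real.rpow_sub_one hR0.ne', Real.rpow_natCast]
  rw [hpow]
  calc ∫ y in ball x R, ‖gradient u y‖ * ‖gradient v y‖
      ≤ M / R ^ 2 * (2 * K * (C₁ * (1 + 4 * R)) + C₁ ^ 2) * ((2 * R) ^ n * ω) := by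
        rw [integral_mul_lap cF hη hηc] at step1
        exact step1.trans step2
    _ ≤ M / R ^ 2 * (2 * K * (C₁ * (5 * R)) + C₁ ^ 2 * R) * ((2 * R) ^ n * ω) := by
        gcongr
        · linarith
        · nlinarith [sq_nonneg C₁]
    _ = C * (R ^ n / R) := by
        rw [hC, mul_pow]; field_simp; ring
    _ ≤ (C + 1) * (R ^ n / R) := by gcongr; linarith
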